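/- For all n ≥ 0 and every I ∈ P_n, the sum of all entries in row I of AM_n equals (−1)^{|I|}; the same holds for BM_n and for HM_n. -/

import Mathlib

/-! Each row `K` of the Möbius matrix is an alternating sum over the interval `[K, univ]` of the
boolean lattice, so it vanishes unless `K = univ`, when it equals `1` (`sum_Mobmat_row`). The
vector of row sums of `X * Mobmat n` is therefore the last column of `X` (`sum_mul_Mobmat_row`).
Along the column indexed by `univ` the recursions for `Amat`, `Bmat` and `Hmat` all pick up a sign
exactly when the row contains the top element, so by induction that column is
`I ↦ (-1) ^ I.card` (`Amat_Bmat_univ`, `Hmat_univ`). -/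

open Finset

/-- Restriction of a subset of `Fin (n+1)` to `Fin n` (forgetting the top element). -/
def resSet {n : ℕ} (I : Finset (Fin (n + 1))) : Finset (Fin n) :=
  Finset.univ.filter (fun j : Fin n => Fin.castSucc j ∈ I)

mutual
  /-- The matrix `A_n`, rows/columns indexed by subsets of `{1,…,n}` (element `j`
  of `[n]` corresponds to `j-1 : Fin n`, i.e. anti-lexicographic/binary order). -/
  def Amat : (n : ℕ) → Matrix (Finset (Fin n)) (Finset (Fin n)) ℤ
    | 0 => Matrix.of fun _ _ => 1
    | n + 1 => Matrix.of fun I J =>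
        if Fin.last n ∈ I then
          if Fin.last n ∈ J then - Bmat n (resSet I) (resSet J)
          else Amat n (resSet I) (resSet J)
        else Amat n (resSet I) (resSet J)
  /-- The matrix `B_n`. -/
  def Bmat : (n : ℕ) → Matrix (Finset (Fin n)) (Finset (Fin n)) ℤ
    | 0 => Matrix.of fun _ _ => 1
    | n + 1 => Matrix.of fun I J =>
        if Fin.last n ∈ I then
          if Fin.last n ∈ J then - Bmat n (resSet I) (resSet J)
          else 0
        else Amat n (resSet I) (resSet J)
end

/-- The Walsh-Hadamard matrix `H_n`. -/
def Hmat : (n : ℕ) → Matrix (Finset (Fin n)) (Finset (Fin n)) ℤ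
  | 0 => Matrix.of fun _ _ => 1
  | n + 1 => Matrix.of fun I J =>
      if Fin.last n ∈ I ∧ Fin.last n ∈ J then - Hmat n (resSet I) (resSet J)
      else Hmat n (resSet I) (resSet J)

/-- The Möbius matrix `M_n` of the boolean lattice. -/
def Mobmat (n : ℕ) : Matrix (Finset (Fin n)) (Finset (Fin n)) ℤ :=
  Matrix.of fun I J => if I ⊆ J then (-1) ^ (J \ I).card else 0

/-- The zeta matrix `Z_n` of the boolean lattice. -/
def Zetamat (n : ℕ) : Matrix (Finset (Fin n)) (Finset (Fin n)) ℤ :=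
  Matrix.of fun I J => if I ⊆ J then 1 else 0

/-- The subset of `[n] = {1,…,n}` corresponding to a subset of `Fin n`. -/
def natSet {n : ℕ} (I : Finset (Fin n)) : Finset ℕ := Finset.image (fun j : Fin n => (j : ℕ) + 1) I

/-- The ordinal number of a subset in the anti-lexicographic order. -/
def ordFin {n : ℕ} (I : Finset (Fin n)) : ℕ := ∑ j ∈ I, 2 ^ (j : ℕ)

/-- The run (maximal interval of consecutive integers) of `I` containing `j`
(empty if `j ∉ I`). -/
def runOf (I : Finset ℕ) (j : ℕ) : Finset ℕ :=
  I.filter (fun i => ∀ k ∈ Finset.Icc (min i j) (max i j), k ∈ I)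

/-- The set of runs (maximal intervals of consecutive integers) of `I`. -/
def runsOf (I : Finset ℕ) : Finset (Finset ℕ) := I.image (runOf I)

/-- `P` is a prefix of the interval `R`: it consists of an initial segment of `R`. -/
def IsPrefixOf (P R : Finset ℕ) : Prop :=
  P ⊆ R ∧ ∀ i ∈ R, ∀ j ∈ P, i ≤ j → i ∈ P


theorem sum_Mobmat_row (n : ℕ) (K : Finset (Fin n)) :
    ∑ J : Finset (Fin n), Mobmat n K J = if K = univ then 1 else 0 := by
  have h : ∑ J : Finset (Fin n), Mobmat n K J = ∑ T ∈ Kᶜ.powerset, (-1 : ℤ) ^ T.card := by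
    simp only [Mobmat, Matrix.of_apply]
    rw [← Finset.sum_filter]
    refine Finset.sum_nbij' (fun J => J \ K) (fun T => K ∪ T) ?_ ?_ ?_ ?_ ?_
    · intro J _
      simp only [mem_powerset]
      intro x hx
      simp_all
    · intro T _
      simp
    · intro J hJ
      exact Finset.union_sdiff_of_subset (by simpa using hJ)
    · intro T hT
      refine Finset.union_sdiff_cancel_left ?_
      rw [mem_powerset] at hT
      exact disjoint_left.2 fun x hx hx' => (mem_compl.1 (hT hx')) hx
    · intro J _
      rfl
  rw [h, Finset.sum_powerset_neg_one_pow_card]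
  simp [Finset.compl_eq_empty_iff]

theorem sum_mul_Mobmat_row (n : ℕ) (X : Matrix (Finset (Fin n)) (Finset (Fin n)) ℤ)
    (I : Finset (Fin n)) :
    ∑ J : Finset (Fin n), (X * Mobmat n) I J = X I univ := by
  simp only [Matrix.mul_apply]
  rw [Finset.sum_comm]
  simp only [← Finset.mul_sum, sum_Mobmat_row]
  simp

theorem resSet_univ (n : ℕ) : resSet (univ : Finset (Fin (n + 1))) = univ := by
  simp [resSet]

theorem card_eq_card_resSet_add {n : ℕ} (I : Finset (Fin (n + 1))) :
    I.card = (resSet I).card + if Fin.last n ∈ I then 1 else 0 := by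
  have h : I.card = ∑ j : Fin (n + 1), if j ∈ I then 1 else 0 := by simp
  rw [h, Fin.sum_univ_castSucc, resSet, Finset.card_filter]

theorem Amat_Bmat_univ (n : ℕ) : ∀ I : Finset (Fin n),
    Amat n I univ = (-1) ^ I.card ∧ Bmat n I univ = (-1) ^ I.card := by
  induction n with
  | zero =>
    intro I
    simp [Amat, Bmat, Finset.eq_empty_of_isEmpty I]
  | succ n ih =>
    intro I
    obtain ⟨hA, hB⟩ := ih (resSet I)
    rw [card_eq_card_resSet_add I]
    by_cases h : Fin.last n ∈ I <;> simp [Amat, Bmat, h, resSet_univ, hA, hB, pow_succ]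

theorem Hmat_univ (n : ℕ) : ∀ I : Finset (Fin n), Hmat n I univ = (-1) ^ I.card := by
  induction n with
  | zero =>
    intro I
    simp [Hmat, Finset.eq_empty_of_isEmpty I]
  | succ n ih =>
    intro I
    rw [card_eq_card_resSet_add I]
    by_cases h : Fin.last n ∈ I <;> simp [Hmat, h, resSet_univ, ih, pow_succ]

/-- The sum of all entries in row `I` of `AM_n`, of `BM_n` and of
`HM_n` equals `(−1)^{|I|}`. -/
theorem row_sums (n : ℕ) (I : Finset (Fin n)) :
    (∑ J : Finset (Fin n), (Amat n * Mobmat n) I J) = (-1) ^ I.card ∧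
    (∑ J : Finset (Fin n), (Bmat n * Mobmat n) I J) = (-1) ^ I.card ∧
    (∑ J : Finset (Fin n), (Hmat n * Mobmat n) I J) = (-1) ^ I.card := by
  simp only [sum_mul_Mobmat_row]
  exact ⟨(Amat_Bmat_univ n I).1, (Amat_Bmat_univ n I).2, Hmat_univ n I⟩
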